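/- Processing vertices in increasing dfn order and, for each vertex v, appending v to the list D(u) of every neighbor u with dfn(u) > dfn(v), produces for each vertex u the list of its G-neighbors that are ancestors of u in T, sorted by increasing depth. -/

import Mathlib

/-!
In visit order every ancestor comes first: the parent of the vertex visited at time `i + 1` is an
ancestor (possibly equal) of the vertex visited at time `i`, so by induction on `i` all ancestors
of the vertex visited at time `i` have visit time at most `i` (`ord_le_of_isAncestor`). Hence, as
adjacent vertices are comparable in the tree, a neighbour of `u` has smaller visit time iff it is a
proper ancestor of `u`. Two ancestors of `u` are themselves comparable, and along a chain of
ancestors both visit time and depth increase strictly, so the two orders agree.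
-/

open Classical Finset

structure RTree (V : Type*) where
  parent : V → V
  root : V
  parent_root : parent root = root
  reaches : ∀ v : V, ∃ k : ℕ, parent^[k] v = root

namespace RTree

variable {V : Type*}

/-- `u` is an ancestor of `v` (or `u = v`) in the rooted tree `T`. -/
def IsAncestor (T : RTree V) (u v : V) : Prop :=
  ∃ k : ℕ, T.parent^[k] v = u

/-- depth of a vertex: distance (number of edges) from the root. -/
noncomputable def depth (T : RTree V) (v : V) : ℕ :=
  Nat.find (T.reaches v)

/-- number of vertices in the subtree rooted at `v`. -/
noncomputable def subtreeSize [Fintype V] (T : RTree V) (v : V) : ℕ :=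
  (Finset.univ.filter fun u => T.IsAncestor v u).card

end RTree

/-- A heavy-light decomposition of a rooted tree: `heavy c` means the edge
from `parent c` to `c` is marked heavy (solid). -/
structure HLDecomp {V : Type*} [Fintype V] (T : RTree V) where
  heavy : V → Prop
  heavy_ne_root : ∀ c, heavy c → c ≠ T.root
  heavy_max : ∀ c c', heavy c → T.parent c' = T.parent c → c' ≠ T.parent c' →
      T.subtreeSize c' ≤ T.subtreeSize c
  heavy_exists : ∀ u : V, (∃ c, T.parent c = u ∧ c ≠ u) → ∃ c, T.parent c = u ∧ c ≠ u ∧ heavy c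
  heavy_unique : ∀ c c', heavy c → heavy c' → T.parent c = T.parent c' → c = c'

/-- number of light (dashed) edges on the tree path from the root to `v`. -/
noncomputable def lightCount {V : Type*} [Fintype V] (T : RTree V) (H : HLDecomp T) (v : V) : ℕ :=
  (Finset.univ.filter fun u => T.IsAncestor u v ∧ u ≠ T.root ∧ ¬ H.heavy u).card

namespace RTree

theorem depth_parent_lt {V : Type*} (T : RTree V) {v : V} (hv : v ≠ T.root) :
    T.depth (T.parent v) < T.depth v := by
  have h : T.parent^[T.depth v] v = T.root := Nat.find_spec (T.reaches v)
  rcases hd : T.depth v with _ | m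
  · rw [hd] at h
    exact absurd h hv
  · rw [hd, Function.iterate_succ_apply] at h
    exact Nat.lt_succ_of_le (Nat.find_min' (T.reaches (T.parent v)) h)

theorem IsAncestor.eq_or_parent {V : Type*} {T : RTree V} {a v : V} (h : T.IsAncestor a v) :
    a = v ∨ T.IsAncestor a (T.parent v) := by
  obtain ⟨k, hk⟩ := h
  rcases k with _ | k
  · exact Or.inl hk.symm
  · exact Or.inr ⟨k, by rwa [Function.iterate_succ_apply] at hk⟩

theorem IsAncestor.trans {V : Type*} {T : RTree V} {a b c : V} (hab : T.IsAncestor a b)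
    (hbc : T.IsAncestor b c) : T.IsAncestor a c := by
  obtain ⟨k, rfl⟩ := hab
  obtain ⟨l, rfl⟩ := hbc
  exact ⟨k + l, Function.iterate_add_apply _ _ _ _⟩

theorem eq_root_of_isAncestor_root {V : Type*} {T : RTree V} {a : V}
    (h : T.IsAncestor a T.root) : a = T.root := by
  obtain ⟨k, rfl⟩ := h
  exact Function.iterate_fixed T.parent_root k

theorem IsAncestor.eq_or_depth_lt {V : Type*} {T : RTree V} {a b : V} (h : T.IsAncestor a b) :
    a = b ∨ T.depth a < T.depth b := by
  obtain ⟨k, hk⟩ := h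
  induction k generalizing b with
  | zero => exact Or.inl hk.symm
  | succ k ih =>
    by_cases hb : b = T.root
    · subst hb
      exact Or.inl (eq_root_of_isAncestor_root ⟨k + 1, hk⟩)
    · rw [Function.iterate_succ_apply] at hk
      have hlt := T.depth_parent_lt hb
      rcases ih hk with rfl | h
      · exact Or.inr hlt
      · exact Or.inr (h.trans hlt)

/-- The ancestors of a vertex form a chain. -/
theorem IsAncestor.total {V : Type*} {T : RTree V} {a b u : V} (ha : T.IsAncestor a u)
    (hb : T.IsAncestor b u) : T.IsAncestor a b ∨ T.IsAncestor b a := by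
  obtain ⟨k, rfl⟩ := ha
  obtain ⟨l, rfl⟩ := hb
  rcases le_total k l with h | h
  · exact Or.inr ⟨l - k, by rw [← Function.iterate_add_apply, Nat.sub_add_cancel h]⟩
  · exact Or.inl ⟨k - l, by rw [← Function.iterate_add_apply, Nat.sub_add_cancel h]⟩

/-- Induction on the visit time of `v`: a proper ancestor of `v` is an ancestor of its parent, hence
of the vertex visited immediately before `v`. -/
theorem ord_le_of_isAncestor {n : ℕ} (T : RTree (Fin n)) (ord : Fin n ≃ Fin n)
    (hroot : (ord T.root : ℕ) = 0)
    (hdfs : ∀ i j : Fin n, (i : ℕ) = (j : ℕ) + 1 →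
      T.IsAncestor (T.parent (ord.symm i)) (ord.symm j))
    {a v : Fin n} (h : T.IsAncestor a v) : (ord a : ℕ) ≤ (ord v : ℕ) := by
  obtain ⟨m, hm⟩ : ∃ m : ℕ, (ord v : ℕ) = m := ⟨_, rfl⟩
  induction m generalizing v with
  | zero =>
    have hv : v = T.root := ord.injective (Fin.ext (hm.trans hroot.symm))
    subst hv
    rw [eq_root_of_isAncestor_root h]
  | succ m ih =>
    rcases h.eq_or_parent with rfl | h
    · exact le_rfl
    · have hlt : m < n := by have := (ord v).isLt; omega
      have hp := hdfs (ord v) ⟨m, hlt⟩ hm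
      rw [Equiv.symm_apply_apply] at hp
      have := ih (h.trans hp) (by simp)
      rw [Equiv.apply_symm_apply] at this
      simp only at this
      omega

end RTree

/-- Processing vertices in increasing dfn order and, for each vertex
`v`, appending `v` to the list `D u` of every neighbour `u` with `dfn u > dfn v`, produces
for each vertex `u` the list of its `G`-neighbours that are ancestors of `u` in `T`,
sorted by increasing depth: the set of neighbours of `u` with smaller dfn is exactly the
set of neighbours of `u` that are proper ancestors of `u`, and on this set increasing dfn
order agrees with increasing depth order. -/
theorem build_D_correct {n : ℕ} (G : SimpleGraph (Fin n)) (T : RTree (Fin n))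
    (ord : Fin n ≃ Fin n)
    (hroot : (ord T.root : ℕ) = 0)
    (hspan : ∀ v : Fin n, v ≠ T.root → G.Adj (T.parent v) v)
    (hdfs : ∀ i j : Fin n, (i : ℕ) = (j : ℕ) + 1 →
      T.IsAncestor (T.parent (ord.symm i)) (ord.symm j))
    (hdfsProp : ∀ a b : Fin n, G.Adj a b → T.IsAncestor a b ∨ T.IsAncestor b a) :
    ∀ u : Fin n,
      ((Finset.univ.filter fun w => G.Adj w u ∧ (ord w : ℕ) < (ord u : ℕ))
        = Finset.univ.filter fun w => G.Adj w u ∧ T.IsAncestor w u ∧ w ≠ u) ∧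
      (∀ a b : Fin n, G.Adj a u → G.Adj b u → T.IsAncestor a u → T.IsAncestor b u →
        ((ord a : ℕ) ≤ (ord b : ℕ) ↔ T.depth a ≤ T.depth b)) := by
  have key : ∀ {a v : Fin n}, T.IsAncestor a v → (ord a : ℕ) ≤ (ord v : ℕ) :=
    fun h => T.ord_le_of_isAncestor ord hroot hdfs h
  have key_lt : ∀ {a v : Fin n}, T.IsAncestor a v → a ≠ v → (ord a : ℕ) < (ord v : ℕ) :=
    fun h hne => lt_of_le_of_ne (key h) fun he => hne (ord.injective (Fin.ext he))
  intro u
  refine ⟨?_, ?_⟩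
  · ext w
    simp only [Finset.mem_filter, Finset.mem_univ, true_and]
    constructor
    · rintro ⟨hadj, hlt⟩
      refine ⟨hadj, ?_, hadj.ne⟩
      exact (hdfsProp w u hadj).resolve_right fun h => absurd (key h) (not_le.mpr hlt)
    · rintro ⟨hadj, hanc, hne⟩
      exact ⟨hadj, key_lt hanc hne⟩
  · intro a b _ _ ha hb
    by_cases hab : a = b
    · subst hab
      simp
    · rcases ha.total hb with h | h
      · have h1 := key_lt h hab
        have h2 := h.eq_or_depth_lt.resolve_left hab
        exact ⟨fun _ => h2.le, fun _ => h1.le⟩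
      · have h1 := key_lt h (Ne.symm hab)
        have h2 := h.eq_or_depth_lt.resolve_left (Ne.symm hab)
        exact ⟨fun h' => absurd h' (not_le.mpr h1), fun h' => absurd h' (not_le.mpr h2)⟩
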